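/- Let q ≥ 1, let ε be a real random variable with E[|ε|^{2s}] < ∞ for some s ≥ 1, and set μ̄ = (E[|ε|^{2s}])^{1/s}. Let α₁,…,α_q ≥ 0 satisfy α₁+⋯+α_q < 1/μ̄, and let Λ_ε be the random q×q companion matrix with first row (α₁ε²,…,α_qε²), ones on the subdiagonal, and zeros elsewhere. Then there exists a monotone vector norm ‖·‖ on ℝ^q such that sup_{‖x‖=1} (E[‖Λ_ε x‖^s])^{1/s} < 1; in particular, (E[‖Λ_ε x‖^s])^{1/s} < ‖x‖ for every x ≠ 0. -/

import Mathlib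

open MeasureTheory

/-- A vector norm on ℝ^d, given as a function satisfying the norm axioms. -/
def IsVectorNorm {d : ℕ} (N : (Fin d → ℝ) → ℝ) : Prop :=
  (∀ x, 0 ≤ N x) ∧ (∀ x, N x = 0 ↔ x = 0) ∧
  (∀ (c : ℝ) (x : Fin d → ℝ), N (c • x) = |c| * N x) ∧
  (∀ x y : Fin d → ℝ, N (x + y) ≤ N x + N y)

/-- A vector norm on ℝ^q is monotone if |x_i| ≤ |y_i| for all i implies ‖x‖ ≤ ‖y‖. -/
def IsMonotoneNorm {d : ℕ} (N : (Fin d → ℝ) → ℝ) : Prop :=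
  ∀ x y : Fin d → ℝ, (∀ i, |x i| ≤ |y i|) → N x ≤ N y

/-- The random companion matrix Λ_ε with first row (α₁ε²,…,α_qε²), ones on the
subdiagonal and zeros elsewhere, as a function of the realization e of ε. -/
def lambdaMat (q : ℕ) (αc : ℕ → ℝ) (e : ℝ) : Matrix (Fin q) (Fin q) ℝ :=
  Matrix.of fun i j =>
    if (i : ℕ) = 0 then αc ((j : ℕ) + 1) * e ^ 2
    else if (i : ℕ) = (j : ℕ) + 1 then 1 else 0

/-!
By the Minkowski inequality in `L^s`, a weighted `ℓ¹` norm `N_w x = ∑ i, w i * |x i|` satisfies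
`‖N_w (M x)‖_{L^s} ≤ N_{w S} x` for every random matrix `M`, where `S i j = ‖M i j‖_{L^s}`. It is
therefore enough to find positive weights with `w S ≤ ρ w` for some `ρ < 1`. For `M = Λ_ε` the
matrix `S` is again a companion matrix, with first row `a j = |α j| μ̄` of total mass less than `1`.
The tail sums `w j = ∑ k > j, (a k + δ)` with a small `δ > 0` have `w 0 ≤ 1`, whence
`(w S) j ≤ a (j + 1) + w (j + 1) = w j - δ ≤ (1 - δ) w j`.
-/

open Finset Matrix
open scoped ENNReal

section WeightedL1Norm

variable {ι : Type*} [Fintype ι]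

/-- The weighted `ℓ¹` norm `∑ i, w i * |x i|`; it is a norm when all the weights are positive. -/
def weightedL1Norm (w x : ι → ℝ) : ℝ :=
  ∑ i, w i * |x i|

lemma weightedL1Norm_nonneg {w : ι → ℝ} (hw : 0 ≤ w) (x : ι → ℝ) : 0 ≤ weightedL1Norm w x :=
  sum_nonneg fun i _ => mul_nonneg (hw i) (abs_nonneg _)

lemma weightedL1Norm_smul_weight (c : ℝ) (w x : ι → ℝ) :
    weightedL1Norm (c • w) x = c * weightedL1Norm w x := by
  simp [weightedL1Norm, mul_sum, mul_assoc]

lemma weightedL1Norm_mono_weight {v w : ι → ℝ} (h : v ≤ w) (x : ι → ℝ) :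
    weightedL1Norm v x ≤ weightedL1Norm w x :=
  sum_le_sum fun i _ => mul_le_mul_of_nonneg_right (h i) (abs_nonneg _)

lemma weightedL1Norm_eq_zero_iff {w : ι → ℝ} (hw : ∀ i, 0 < w i) {x : ι → ℝ} :
    weightedL1Norm w x = 0 ↔ x = 0 := by
  rw [weightedL1Norm,
    sum_eq_zero_iff_of_nonneg fun i _ => mul_nonneg (hw i).le (abs_nonneg _), funext_iff]
  simp [(hw _).ne']

lemma isMonotoneNorm_weightedL1Norm {d : ℕ} {w : Fin d → ℝ} (hw : 0 ≤ w) :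
    IsMonotoneNorm (weightedL1Norm w) :=
  fun _ _ h => sum_le_sum fun i _ => mul_le_mul_of_nonneg_left (h i) (hw i)

lemma isVectorNorm_weightedL1Norm {d : ℕ} {w : Fin d → ℝ} (hw : ∀ i, 0 < w i) :
    IsVectorNorm (weightedL1Norm w) := by
  refine ⟨weightedL1Norm_nonneg fun i => (hw i).le, fun x => weightedL1Norm_eq_zero_iff hw,
    fun c x => ?_, fun x y => ?_⟩
  · simp [weightedL1Norm, mul_sum, abs_mul, mul_left_comm]
  · simp only [weightedL1Norm, ← sum_add_distrib, ← mul_add]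
    exact sum_le_sum fun i _ => mul_le_mul_of_nonneg_left (abs_add_le _ _) (hw i).le

end WeightedL1Norm

section Lp

variable {Ω : Type*} [MeasurableSpace Ω] {μ : Measure Ω}

lemma memLp_ofReal_iff_integrable_rpow_of_nonneg {f : Ω → ℝ} (hf : 0 ≤ f) {s : ℝ} (hs : 0 < s) :
    MemLp f (ENNReal.ofReal s) μ ↔ Integrable (fun ω => f ω ^ s) μ := by
  have hs_ne_zero : ENNReal.ofReal s ≠ 0 := (ENNReal.ofReal_pos.2 hs).ne'
  have norm_rpow_eq : (fun ω => ‖f ω‖ ^ (ENNReal.ofReal s).toReal) = fun ω => f ω ^ s := by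
    simp only [Real.norm_of_nonneg (hf _), ENNReal.toReal_ofReal hs.le]
  refine ⟨fun h => norm_rpow_eq ▸ h.integrable_norm_rpow hs_ne_zero ENNReal.ofReal_ne_top,
    fun h => ?_⟩
  have root_eq : (fun ω => (f ω ^ s) ^ s⁻¹) = f :=
    funext fun ω => Real.rpow_rpow_inv (hf ω) hs.ne'
  have hf_meas : AEStronglyMeasurable f μ :=
    root_eq ▸ (h.aemeasurable.pow_const s⁻¹).aestronglyMeasurable
  rw [← integrable_norm_rpow_iff hf_meas hs_ne_zero ENNReal.ofReal_ne_top, norm_rpow_eq]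
  exact h

lemma lpNorm_ofReal_eq_integral_rpow_of_nonneg {f : Ω → ℝ} (hf : 0 ≤ f)
    (hf_meas : AEStronglyMeasurable f μ) {s : ℝ} (hs : 0 < s) :
    lpNorm f (ENNReal.ofReal s) μ = (∫ ω, f ω ^ s ∂μ) ^ (1 / s) := by
  rw [lpNorm_eq_integral_norm_rpow_toReal (ENNReal.ofReal_pos.2 hs).ne' ENNReal.ofReal_ne_top
    hf_meas, ENNReal.toReal_ofReal hs.le, one_div]
  simp only [Real.norm_of_nonneg (hf _)]

end Lp

section RandomMatrix

variable {Ω : Type*} [MeasurableSpace Ω] {μ : Measure Ω} {p : ℝ≥0∞}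
  {m n : Type*} [Fintype n]

/-- The deterministic matrix of `L^p` norms of the entries of a random matrix. It controls the
`L^p` size of the random matrix in every weighted `ℓ¹` norm. An entry outside `L^p` contributes the
junk value `0` of `lpNorm`. -/
noncomputable def lpNormMatrix (M : Ω → Matrix m n ℝ) (p : ℝ≥0∞) (μ : Measure Ω) :
    Matrix m n ℝ :=
  Matrix.of fun i j => lpNorm (fun ω => M ω i j) p μ

lemma memLp_mulVec_apply {M : Ω → Matrix m n ℝ} (hM : ∀ i j, MemLp (fun ω => M ω i j) p μ)
    (x : n → ℝ) (i : m) : MemLp (fun ω => (M ω *ᵥ x) i) p μ :=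
  memLp_finsetSum _ fun j _ => (hM i j).mul_const (x j)

lemma memLp_weightedL1Norm_mulVec [Fintype m] {M : Ω → Matrix m n ℝ}
    (hM : ∀ i j, MemLp (fun ω => M ω i j) p μ) (w : m → ℝ) (x : n → ℝ) :
    MemLp (fun ω => weightedL1Norm w (M ω *ᵥ x)) p μ :=
  memLp_finsetSum _ fun i _ => (memLp_mulVec_apply hM x i).norm.const_mul (w i)

lemma lpNorm_mulVec_apply_le (hp : 1 ≤ p) {M : Ω → Matrix m n ℝ}
    (hM : ∀ i j, MemLp (fun ω => M ω i j) p μ) (x : n → ℝ) (i : m) :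
    lpNorm (fun ω => (M ω *ᵥ x) i) p μ ≤ ∑ j, lpNormMatrix M p μ i j * |x j| := by
  have mulVec_eq : (fun ω => (M ω *ᵥ x) i) = ∑ j, x j • fun ω => M ω i j := by
    ext ω
    simp [mulVec, dotProduct, mul_comm]
  rw [mulVec_eq]
  refine (lpNorm_sum_le (fun j _ => (hM i j).const_smul (x j)) hp).trans_eq ?_
  simp [lpNorm_const_smul, lpNormMatrix, mul_comm]

theorem lpNorm_weightedL1Norm_mulVec_le [Fintype m] (hp : 1 ≤ p) {M : Ω → Matrix m n ℝ}
    (hM : ∀ i j, MemLp (fun ω => M ω i j) p μ) {w : m → ℝ} (hw : 0 ≤ w) (x : n → ℝ) :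
    lpNorm (fun ω => weightedL1Norm w (M ω *ᵥ x)) p μ ≤
      weightedL1Norm (w ᵥ* lpNormMatrix M p μ) x := by
  have hMx := memLp_mulVec_apply hM x
  have norm_eq : (fun ω => weightedL1Norm w (M ω *ᵥ x)) =
      ∑ i, w i • fun ω => |(M ω *ᵥ x) i| := by
    ext ω
    simp [weightedL1Norm]
  calc lpNorm (fun ω => weightedL1Norm w (M ω *ᵥ x)) p μ
      ≤ ∑ i, lpNorm (w i • fun ω => |(M ω *ᵥ x) i|) p μ := by
        rw [norm_eq]
        exact lpNorm_sum_le (fun i _ => (hMx i).norm.const_smul (w i)) hp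
    _ = ∑ i, w i * lpNorm (fun ω => (M ω *ᵥ x) i) p μ := by
        refine sum_congr rfl fun i _ => ?_
        rw [lpNorm_const_smul, lpNorm_fun_abs (hMx i).aestronglyMeasurable, coe_nnnorm,
          Real.norm_of_nonneg (hw i)]
    _ ≤ ∑ i, w i * ∑ j, lpNormMatrix M p μ i j * |x j| :=
        sum_le_sum fun i _ => mul_le_mul_of_nonneg_left (lpNorm_mulVec_apply_le hp hM x i) (hw i)
    _ = weightedL1Norm (w ᵥ* lpNormMatrix M p μ) x := by
        simp only [weightedL1Norm, vecMul, dotProduct, mul_sum, sum_mul, mul_assoc]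
        exact sum_comm

theorem lpNorm_weightedL1Norm_mulVec_le_mul (hp : 1 ≤ p) {M : Ω → Matrix n n ℝ}
    (hM : ∀ i j, MemLp (fun ω => M ω i j) p μ) {w : n → ℝ} (hw : 0 ≤ w) {ρ : ℝ}
    (hρ : w ᵥ* lpNormMatrix M p μ ≤ ρ • w) (x : n → ℝ) :
    lpNorm (fun ω => weightedL1Norm w (M ω *ᵥ x)) p μ ≤ ρ * weightedL1Norm w x :=
  calc lpNorm (fun ω => weightedL1Norm w (M ω *ᵥ x)) p μ
      ≤ weightedL1Norm (w ᵥ* lpNormMatrix M p μ) x := lpNorm_weightedL1Norm_mulVec_le hp hM hw x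
    _ ≤ weightedL1Norm (ρ • w) x := weightedL1Norm_mono_weight hρ x
    _ = ρ * weightedL1Norm w x := weightedL1Norm_smul_weight ρ w x

end RandomMatrix

section Companion

variable {q : ℕ}

lemma vecMul_lambdaMat_apply {w : ℕ → ℝ} (hw : w q = 0) (a : ℕ → ℝ) (e : ℝ) (j : Fin q) :
    ((fun i : Fin q => w i) ᵥ* lambdaMat q a e) j = w 0 * (a (j + 1) * e ^ 2) + w (j + 1) := by
  obtain ⟨n, rfl⟩ : ∃ n, q = n + 1 := Nat.exists_eq_add_one.2 j.pos
  have last_eq_zero : ¬ (j : ℕ) < n → w (j + 1) = 0 := fun hj => by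
    rwa [show (j : ℕ) = n by omega]
  simp only [vecMul, dotProduct, lambdaMat, of_apply]
  rw [Fin.sum_univ_eq_sum_range
    (fun i => w i * if i = 0 then a (j + 1) * e ^ 2 else if i = j + 1 then 1 else 0),
    sum_range_succ', add_comm]
  simpa [eq_comm] using last_eq_zero

theorem exists_pos_vecMul_lambdaMat_one_le {a : ℕ → ℝ} (ha : 0 ≤ a)
    (hsum : ∑ i ∈ Icc 1 q, a i < 1) :
    ∃ w : Fin q → ℝ, (∀ i, 0 < w i) ∧ ∃ ρ < (1 : ℝ), w ᵥ* lambdaMat q a 1 ≤ ρ • w := by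
  obtain ⟨δ, hδ, hδ_sum⟩ : ∃ δ > 0, ∑ i ∈ Icc 1 q, a i + q * δ ≤ 1 := by
    refine ⟨(1 - ∑ i ∈ Icc 1 q, a i) / (q + 1), div_pos (sub_pos.2 hsum) (by positivity), ?_⟩
    field_simp
    linarith
  let w (j : ℕ) : ℝ := ∑ k ∈ Ico j q, (a (k + 1) + δ)
  have term_pos (k : ℕ) : 0 < a (k + 1) + δ := add_pos_of_nonneg_of_pos (ha _) hδ
  have w_zero_le : w 0 ≤ 1 := by
    have sum_shift : ∑ k ∈ Ico 0 q, a (k + 1) = ∑ i ∈ Icc 1 q, a i := by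
      rw [sum_Ico_add' a 0 q 1, zero_add, Ico_add_one_right_eq_Icc]
    simpa only [w, sum_add_distrib, sum_shift, sum_const, Nat.card_Ico, tsub_zero, nsmul_eq_mul]
      using hδ_sum
  have w_le_one (j : ℕ) : w j ≤ 1 :=
    (sum_le_sum_of_subset_of_nonneg (Ico_subset_Ico_left j.zero_le)
      fun k _ _ => (term_pos k).le).trans w_zero_le
  refine ⟨fun i => w i, fun i => sum_pos (fun k _ => term_pos k) (nonempty_Ico.2 i.2),
    1 - δ, sub_lt_self 1 hδ, fun j => ?_⟩
  have w_step : w j = a (j + 1) + δ + w (j + 1) := sum_eq_sum_Ico_succ_bot j.2 _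
  calc ((fun i : Fin q => w i) ᵥ* lambdaMat q a 1) j
      = w 0 * a (j + 1) + w (j + 1) := by
        rw [vecMul_lambdaMat_apply (by simp [w]), one_pow, mul_one]
    _ ≤ a (j + 1) + w (j + 1) := by
        gcongr
        exact mul_le_of_le_one_left (ha _) w_zero_le
    _ = w j - δ := by linarith
    _ ≤ (1 - δ) * w j := by linarith [mul_le_of_le_one_right hδ.le (w_le_one j)]

variable {Ω : Type*} [MeasurableSpace Ω] {μ : Measure Ω} {p : ℝ≥0∞}

lemma memLp_lambdaMat_apply [IsFiniteMeasure μ] {ε : Ω → ℝ}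
    (hε : MemLp (fun ω => ε ω ^ 2) p μ) (a : ℕ → ℝ) (i j : Fin q) :
    MemLp (fun ω => lambdaMat q a (ε ω) i j) p μ := by
  simp only [lambdaMat, of_apply]
  split_ifs
  exacts [hε.const_mul _, memLp_const 1, memLp_const 0]

lemma lpNormMatrix_lambdaMat [IsProbabilityMeasure μ] (hp : p ≠ 0) (a : ℕ → ℝ) (ε : Ω → ℝ) :
    lpNormMatrix (fun ω => lambdaMat q a (ε ω)) p μ =
      lambdaMat q (fun k => |a k| * lpNorm (fun ω => ε ω ^ 2) p μ) 1 := by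
  ext i j
  simp only [lpNormMatrix, lambdaMat, of_apply, one_pow, mul_one]
  split_ifs
  · exact lpNorm_const_smul (a (j + 1)) (fun ω => ε ω ^ 2) μ
  · simp [lpNorm_const hp (IsProbabilityMeasure.ne_zero μ)]
  · exact lpNorm_fun_zero p μ

end Companion

lemma IsVectorNorm.sSup_lt_one_and_lt_of_le_mul {d : ℕ} {N F : (Fin d → ℝ) → ℝ}
    (hN : IsVectorNorm N) {ρ : ℝ} (hρ : ρ < 1) (hF : ∀ x, F x ≤ ρ * N x) :
    sSup {c : ℝ | ∃ x, N x = 1 ∧ c = F x} < 1 ∧ ∀ x, x ≠ 0 → F x < N x := by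
  constructor
  · refine (Real.sSup_le ?_ (le_max_right ρ 0)).trans_lt (max_lt hρ one_pos)
    rintro _ ⟨x, hx, rfl⟩
    simpa [hx] using (hF x).trans (mul_le_mul_of_nonneg_right (le_max_left ρ 0) (hN.1 x))
  · intro x hx
    have N_pos : 0 < N x := (hN.1 x).lt_of_ne' (mt (hN.2.1 x).1 hx)
    exact (hF x).trans_lt (mul_lt_of_lt_one_left N_pos hρ)

lemma sum_abs_mul_lt_one_of_sum_lt_one_div {ι : Type*} {t : Finset ι} {a : ι → ℝ} {c : ℝ}
    (ha : ∀ i ∈ t, 0 ≤ a i) (hsum : ∑ i ∈ t, a i < 1 / c) : (∑ i ∈ t, |a i|) * c < 1 := by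
  have c_pos : 0 < c := one_div_pos.1 ((sum_nonneg ha).trans_lt hsum)
  rwa [sum_congr rfl fun i hi => abs_of_nonneg (ha i hi), ← lt_div_iff₀ c_pos]

theorem stmt_4_general {Ω : Type*} [MeasurableSpace Ω] {μ : Measure Ω} [IsProbabilityMeasure μ]
    {q : ℕ} {s : ℝ} (hs : 1 ≤ s) {ε : Ω → ℝ} (hmom : Integrable (fun ω => |ε ω| ^ (2 * s)) μ)
    {αc : ℕ → ℝ}
    (hsum : (∑ i ∈ Icc 1 q, |αc i|) * (∫ ω, |ε ω| ^ (2 * s) ∂μ) ^ (1 / s) < 1) :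
    ∃ N : (Fin q → ℝ) → ℝ, IsVectorNorm N ∧ IsMonotoneNorm N ∧ ∃ ρ < (1 : ℝ), ∀ x : Fin q → ℝ,
      Integrable (fun ω => N (lambdaMat q αc (ε ω) *ᵥ x) ^ s) μ ∧
      (∫ ω, N (lambdaMat q αc (ε ω) *ᵥ x) ^ s ∂μ) ^ (1 / s) ≤ ρ * N x := by
  have s_pos : 0 < s := one_pos.trans_le hs
  have one_le_p : 1 ≤ ENNReal.ofReal s := ENNReal.one_le_ofReal.2 hs
  have abs_rpow_eq (ω : Ω) : |ε ω| ^ (2 * s) = (ε ω ^ 2) ^ s := by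
    rw [Real.rpow_mul (abs_nonneg _), Real.rpow_two, sq_abs]
  simp only [abs_rpow_eq] at hmom hsum
  have ε_sq_nonneg : 0 ≤ fun ω => ε ω ^ 2 := fun ω => sq_nonneg (ε ω)
  have ε_sq_memLp := (memLp_ofReal_iff_integrable_rpow_of_nonneg ε_sq_nonneg s_pos).2 hmom
  rw [← lpNorm_ofReal_eq_integral_rpow_of_nonneg ε_sq_nonneg ε_sq_memLp.aestronglyMeasurable s_pos,
    sum_mul] at hsum
  obtain ⟨w, w_pos, ρ, hρ, hwρ⟩ := exists_pos_vecMul_lambdaMat_one_le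
    (fun k => mul_nonneg (abs_nonneg (αc k)) lpNorm_nonneg) hsum
  rw [← lpNormMatrix_lambdaMat (one_pos.trans_le one_le_p).ne'] at hwρ
  have w_nonneg : 0 ≤ w := fun i => (w_pos i).le
  refine ⟨weightedL1Norm w, isVectorNorm_weightedL1Norm w_pos,
    isMonotoneNorm_weightedL1Norm w_nonneg, ρ, hρ, fun x => ?_⟩
  have N_nonneg : 0 ≤ fun ω => weightedL1Norm w (lambdaMat q αc (ε ω) *ᵥ x) :=
    fun ω => weightedL1Norm_nonneg w_nonneg _
  have entry_memLp := memLp_lambdaMat_apply (q := q) ε_sq_memLp αc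
  have N_memLp := memLp_weightedL1Norm_mulVec entry_memLp w x
  refine ⟨(memLp_ofReal_iff_integrable_rpow_of_nonneg N_nonneg s_pos).1 N_memLp, ?_⟩
  rw [← lpNorm_ofReal_eq_integral_rpow_of_nonneg N_nonneg N_memLp.aestronglyMeasurable s_pos]
  exact lpNorm_weightedL1Norm_mulVec_le_mul one_le_p entry_memLp w_nonneg hwρ x

/-- Lemma 2: let ε have law με with E|ε|^{2s} < ∞ (s ≥ 1),
μ̄ = (E|ε|^{2s})^{1/s}, and α_i ≥ 0 with Σα_i < 1/μ̄.  Then there is a monotone vector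
norm ‖·‖ on ℝ^q with sup_{‖x‖=1}(E‖Λ_εx‖^s)^{1/s} < 1; in particular
(E‖Λ_εx‖^s)^{1/s} < ‖x‖ for every x ≠ 0. -/
theorem stmt_4 (q : ℕ) (hq : 1 ≤ q) (s : ℝ) (hs : 1 ≤ s)
    (με : Measure ℝ) (hprob : IsProbabilityMeasure με)
    (hmom : Integrable (fun e => |e| ^ (2 * s)) με)
    (αc : ℕ → ℝ) (hα : ∀ i, 1 ≤ i → i ≤ q → 0 ≤ αc i)
    (hsum : (∑ i ∈ Finset.Icc 1 q, αc i) < 1 / (∫ e, |e| ^ (2 * s) ∂με) ^ (1 / s)) :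
    ∃ N : (Fin q → ℝ) → ℝ, IsVectorNorm N ∧ IsMonotoneNorm N ∧
      sSup {c : ℝ | ∃ x : Fin q → ℝ, N x = 1 ∧
        c = (∫ e, N ((lambdaMat q αc e).mulVec x) ^ s ∂με) ^ (1 / s)} < 1 ∧
      ∀ x : Fin q → ℝ, x ≠ 0 →
        (∫ e, N ((lambdaMat q αc e).mulVec x) ^ s ∂με) ^ (1 / s) < N x := by
  obtain ⟨N, hN, hN_mono, ρ, hρ, hle⟩ := stmt_4_general hs hmom
    (sum_abs_mul_lt_one_of_sum_lt_one_div
      (fun i hi => hα i (mem_Icc.1 hi).1 (mem_Icc.1 hi).2) hsum)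
  exact ⟨N, hN, hN_mono, hN.sSup_lt_one_and_lt_of_le_mul hρ fun x => (hle x).2⟩
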